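/- Let ω = i₁i₂⋯ and ω' = j₁j₂⋯ be infinite words over {1,…,m} with π(ω) = π(ω'). Then for every k ≥ 1 there exist a finite prefix σ_k ≺ ω and a finite prefix τ_k ≺ ω' with p_{σ_k}, p_{τ_k} ∈ ((k−1)T, kT] such that (p_{σ_k} − p_{τ_k}, λ^{−p_{τ_k}}(b_{σ_k} − b_{τ_k})) ∈ Ξ. -/

import Mathlib

open Polynomial Filter

noncomputable section

namespace PVOSC

variable {m : ℕ}

/-- `λ⁻¹` is a Pisot (P.V.) number: an algebraic integer `> 1` all of whose
Galois conjugates other than itself have complex absolute value `< 1`. -/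
def IsPisot (θ : ℝ) : Prop :=
  1 < θ ∧ IsIntegral ℤ θ ∧
    ∀ z : ℂ, aeval z (minpoly ℤ θ) = 0 → z ≠ (θ : ℂ) → ‖z‖ < 1

/-- `p_σ` for a finite word `σ`. -/
def wordP (p : Fin m → ℕ) (σ : List (Fin m)) : ℕ := (σ.map p).sum

/-- The contracting similitude `S_i(x) = λ^{p_i} x + b_i`. -/
def Smap (lam : ℝ) (p : Fin m → ℕ) (b : Fin m → ℝ) (i : Fin m) : ℝ → ℝ :=
  fun x => lam ^ p i * x + b i

/-- `S_σ = S_{i₁} ∘ ⋯ ∘ S_{i_k}` for `σ = i₁ ⋯ i_k`. -/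
def SW (lam : ℝ) (p : Fin m → ℕ) (b : Fin m → ℝ) (σ : List (Fin m)) : ℝ → ℝ :=
  σ.foldr (fun i f => Smap lam p b i ∘ f) id

/-- `b_σ`, the translation part of `S_σ`. -/
def wordB (lam : ℝ) (p : Fin m → ℕ) (b : Fin m → ℝ) (σ : List (Fin m)) : ℝ :=
  SW lam p b σ 0

/-- `B = {0, b₁, …, b_m}`. -/
def Bset (b : Fin m → ℝ) : Set ℝ := insert 0 (Set.range b)

/-- `B − B`. -/
def BB (b : Fin m → ℝ) : Set ℝ := {x | ∃ u ∈ Bset b, ∃ v ∈ Bset b, x = u - v}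

/-- `max_i |b_i|`. -/
def bmax (b : Fin m → ℝ) : ℝ := ⨆ i, |b i|

/-- The set `𝒞`. -/
def Cset (lam : ℝ) (b : Fin m → ℝ) (T : ℕ) : Set ℝ :=
  {x | |x| ≤ (1 + lam ^ (1 - (T : ℤ))) * bmax b / (1 - lam) ∧
    ∃ R : ℝ[X], (∀ n, R.coeff n ∈ BB b) ∧ lam ^ (2 - (T : ℤ)) * x = R.eval lam⁻¹}

/-- The vertex set `Ξ = {n ∈ ℤ : |n| ≤ T−1} × 𝒞`. -/
def Xi (lam : ℝ) (b : Fin m → ℝ) (T : ℕ) : Set (ℤ × ℝ) :=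
  {v | |v.1| ≤ (T : ℤ) - 1 ∧ v.2 ∈ Cset lam b T}

/-- The open set condition. -/
def OSC (lam : ℝ) (p : Fin m → ℕ) (b : Fin m → ℝ) : Prop :=
  ∃ U : Set ℝ, U.Nonempty ∧ IsOpen U ∧ (⋃ i, Smap lam p b i '' U) ⊆ U ∧
    ∀ i j : Fin m, i ≠ j → Smap lam p b i '' U ∩ Smap lam p b j '' U = ∅

/-- The strong separation condition for the attractor `E`. -/
def SSC (lam : ℝ) (p : Fin m → ℕ) (b : Fin m → ℝ) (E : Set ℝ) : Prop :=
  ∀ i j : Fin m, i ≠ j → Smap lam p b i '' E ∩ Smap lam p b j '' E = ∅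

/-- Group law on `ℤ × ℝ`: `(p₁,c₁)·(p₂,c₂) = (p₁+p₂, λ^{p₁} c₂ + c₁)`. -/
def gmul (lam : ℝ) (u v : ℤ × ℝ) : ℤ × ℝ := (u.1 + v.1, lam ^ u.1 * v.2 + u.2)

/-- Inverse for the group law: `(p,c)⁻¹ = (−p, −λ^{−p} c)`. -/
def ginv (lam : ℝ) (u : ℤ × ℝ) : ℤ × ℝ := (-u.1, -(lam ^ (-u.1) * u.2))

/-- The group element `(p_σ, b_σ)` associated to a finite word `σ`. -/
def elem (lam : ℝ) (p : Fin m → ℕ) (b : Fin m → ℝ) (σ : List (Fin m)) : ℤ × ℝ :=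
  ((wordP p σ : ℤ), wordB lam p b σ)

/-- The sequence `(q_k, c_k)` with the recursive structure w.r.t. `({α_k}, {β_k})`:
`recSeq … k = (q_{k+1}, c_{k+1})`, i.e. index `k` corresponds to `(q_{k+1}, c_{k+1})`. -/
def recSeq (lam : ℝ) (p : Fin m → ℕ) (b : Fin m → ℝ) (α β : ℕ → List (Fin m)) : ℕ → ℤ × ℝ
  | 0 => gmul lam (ginv lam (elem lam p b (β 0))) (elem lam p b (α 0))
  | (k+1) => gmul lam (ginv lam (elem lam p b (β (k+1))))
      (gmul lam (recSeq lam p b α β k) (elem lam p b (α (k+1))))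

/-- The edge relation of the directed graph `G` on `Ξ`. -/
def edge (lam : ℝ) (p : Fin m → ℕ) (b : Fin m → ℝ) (T : ℕ) (u v : ℤ × ℝ) : Prop :=
  u ∈ Xi lam b T ∧ v ∈ Xi lam b T ∧
    ∃ α β : List (Fin m), 1 ≤ wordP p α ∧ wordP p α ≤ 2 * T - 1 ∧
      1 ≤ wordP p β ∧ wordP p β ≤ 2 * T - 1 ∧
      v.1 = (wordP p α : ℤ) + u.1 - (wordP p β : ℤ) ∧
      v.2 = lam ^ (-(wordP p β : ℤ)) * u.2 + lam ^ (u.1 - (wordP p β : ℤ)) * wordB lam p b α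
        - lam ^ (-(wordP p β : ℤ)) * wordB lam p b β

/-- `Λ = Ξ ∩ {(p_j − p_i, λ^{−p_i}(b_j − b_i)) : i ≠ j}`. -/
def Lam (lam : ℝ) (p : Fin m → ℕ) (b : Fin m → ℝ) (T : ℕ) : Set (ℤ × ℝ) :=
  Xi lam b T ∩ {v | ∃ i j : Fin m, i ≠ j ∧
    v = ((p j : ℤ) - (p i : ℤ), lam ^ (-(p i : ℤ)) * (b j - b i))}

/-- The length-`k` prefix of an infinite word `ω`. -/
def prefixList (ω : ℕ → Fin m) (k : ℕ) : List (Fin m) := (List.range k).map ω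

/-!
Choose prefixes `σ ≺ ω`, `τ ≺ ω'` by stopping each word as soon as its exponent exceeds `(k - 1) T`;
no step exceeds `T`, so both exponents lie in the window and differ by at most `T - 1`.

* Size: `b_σ` and `b_τ` approximate the common point `π(ω) = π(ω')` within `λ ^ p_σ * M` and
  `λ ^ p_τ * M`, where `M = max |b_i| / (1 - λ)`. Rescaling by `λ ^ (-p_τ)` gives the bound in `𝒞`.
* Arithmetic: since every `p_i` is positive, `b_σ` is a polynomial in `λ` of degree `< p_σ` in which
  each power of `λ` carries at most one digit `b_i`. Reversing the coefficients of the difference of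
  two such polynomials turns it into a polynomial in `λ⁻¹`.
-/

section Words

variable {lam : ℝ} {p : Fin m → ℕ} {b : Fin m → ℝ}

theorem wordP_nil : wordP p [] = 0 := rfl

theorem wordP_cons (i : Fin m) (σ : List (Fin m)) : wordP p (i :: σ) = p i + wordP p σ := by
  simp [wordP]

theorem wordB_nil : wordB lam p b [] = 0 := rfl

theorem wordB_cons (i : Fin m) (σ : List (Fin m)) :
    wordB lam p b (i :: σ) = lam ^ p i * wordB lam p b σ + b i := rfl

theorem wordB_append (σ τ : List (Fin m)) :
    wordB lam p b (σ ++ τ) = wordB lam p b σ + lam ^ wordP p σ * wordB lam p b τ := by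
  induction σ with
  | nil => simp [wordB_nil, wordP_nil]
  | cons i σ ih =>
    rw [List.cons_append, wordB_cons, wordB_cons, wordP_cons, ih, pow_add]
    ring

theorem prefixList_add (ω : ℕ → Fin m) (n d : ℕ) :
    prefixList ω (n + d) = prefixList ω n ++ prefixList (fun j => ω (n + j)) d := by
  simp [prefixList, List.range_add, Function.comp_def]

theorem wordP_prefixList (ω : ℕ → Fin m) (n : ℕ) :
    wordP p (prefixList ω n) = ∑ j ∈ Finset.range n, p (ω j) := by
  rw [wordP, prefixList, List.map_map, ← List.sum_toFinset _ List.nodup_range,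
    List.toFinset_range]
  rfl

end Words

section Stopping

theorem exists_mem_Ioc_add_of_le_add {α : Type*} [LinearOrder α] [Add α] [AddRightMono α]
    {s : ℕ → α} {a t : α} (start : s 0 ≤ a) (step : ∀ n, s (n + 1) ≤ s n + t)
    (exceeds : ∃ n, a < s n) : ∃ n, s n ∈ Set.Ioc a (a + t) := by
  classical
  obtain ⟨n, hn⟩ : ∃ n, Nat.find exceeds = n + 1 :=
    Nat.exists_eq_succ_of_ne_zero fun h => (h ▸ Nat.find_spec exceeds).not_ge start
  have before : s n ≤ a := not_lt.1 (Nat.find_min exceeds (by omega))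
  exact ⟨n + 1, hn ▸ Nat.find_spec exceeds, (step n).trans (add_le_add_left before t)⟩

theorem exists_wordP_prefixList_mem_Ioc {p : Fin m → ℕ} {T : ℕ} (hp : ∀ i, 1 ≤ p i)
    (hpT : ∀ i, p i ≤ T) (ω : ℕ → Fin m) (a : ℕ) :
    ∃ n, wordP p (prefixList ω n) ∈ Set.Ioc a (a + T) := by
  simp only [wordP_prefixList]
  refine exists_mem_Ioc_add_of_le_add (by simp) (fun n => ?_) ⟨a + 1, ?_⟩
  · simpa only [Finset.sum_range_succ] using Nat.add_le_add_left (hpT (ω n)) _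
  · calc a < ∑ j ∈ Finset.range (a + 1), 1 := by simp
      _ ≤ ∑ j ∈ Finset.range (a + 1), p (ω j) := Finset.sum_le_sum fun j _ => hp (ω j)

end Stopping

section Size

variable {lam : ℝ} {p : Fin m → ℕ} {b : Fin m → ℝ}

theorem abs_le_bmax (i : Fin m) : |b i| ≤ bmax b :=
  le_ciSup (f := fun i => |b i|) (Set.finite_range _).bddAbove i

theorem bmax_nonneg : 0 ≤ bmax b :=
  Real.iSup_nonneg fun _ => abs_nonneg _

theorem abs_wordB_le (hlam0 : 0 ≤ lam) (hlam1 : lam < 1) (hp : ∀ i, 1 ≤ p i)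
    (σ : List (Fin m)) : |wordB lam p b σ| ≤ bmax b / (1 - lam) := by
  have one_sub_pos : 0 < 1 - lam := sub_pos.2 hlam1
  induction σ with
  | nil => simpa [wordB_nil] using div_nonneg bmax_nonneg one_sub_pos.le
  | cons i σ ih =>
    have pow_le : lam ^ p i ≤ lam :=
      pow_le_of_le_one hlam0 hlam1.le (Nat.one_le_iff_ne_zero.1 (hp i))
    calc |wordB lam p b (i :: σ)|
        ≤ |lam ^ p i * wordB lam p b σ| + |b i| := abs_add_le _ _
      _ = lam ^ p i * |wordB lam p b σ| + |b i| := by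
        rw [abs_mul, abs_of_nonneg (pow_nonneg hlam0 _)]
      _ ≤ lam * (bmax b / (1 - lam)) + bmax b := by
        gcongr
        exact abs_le_bmax i
      _ = bmax b / (1 - lam) := by
        field_simp
        ring

theorem abs_wordB_prefixList_sub_le (hlam0 : 0 ≤ lam) (hlam1 : lam < 1) (hp : ∀ i, 1 ≤ p i)
    {ω : ℕ → Fin m} {x : ℝ}
    (hx : Tendsto (fun k => wordB lam p b (prefixList ω k)) atTop (nhds x)) (n : ℕ) :
    |wordB lam p b (prefixList ω n) - x| ≤
      lam ^ wordP p (prefixList ω n) * (bmax b / (1 - lam)) := by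
  rw [abs_sub_comm]
  refine le_of_tendsto (hx.sub_const _).abs ?_
  filter_upwards [eventually_ge_atTop n] with N hN
  obtain ⟨d, rfl⟩ := Nat.exists_eq_add_of_le hN
  rw [prefixList_add, wordB_append, add_sub_cancel_left, abs_mul,
    abs_of_nonneg (pow_nonneg hlam0 _)]
  exact mul_le_mul_of_nonneg_left (abs_wordB_le hlam0 hlam1 hp _) (pow_nonneg hlam0 _)

theorem abs_zpow_neg_mul_sub_le (hlam0 : 0 < lam) (hlam1 : lam ≤ 1) {u v x M : ℝ} {q r T : ℕ}
    (hM : 0 ≤ M) (hu : |u - x| ≤ lam ^ q * M) (hv : |v - x| ≤ lam ^ r * M) (hrq : r < q + T) :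
    |lam ^ (-(r : ℤ)) * (u - v)| ≤ (1 + lam ^ (1 - (T : ℤ))) * M := by
  have cancel : lam ^ (-(r : ℤ)) * lam ^ r = 1 := by
    rw [zpow_neg, zpow_natCast, inv_mul_cancel₀ (pow_ne_zero r hlam0.ne')]
  have ratio_le : lam ^ (-(r : ℤ)) * lam ^ q ≤ lam ^ (1 - (T : ℤ)) := by
    rw [← zpow_natCast, ← zpow_add₀ hlam0.ne']
    exact zpow_le_zpow_right_of_le_one₀ hlam0 hlam1 (by omega)
  have dist_le : |u - v| ≤ lam ^ q * M + lam ^ r * M :=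
    (abs_sub_le u x v).trans (add_le_add hu (abs_sub_comm x v ▸ hv))
  calc |lam ^ (-(r : ℤ)) * (u - v)|
      = lam ^ (-(r : ℤ)) * |u - v| := by rw [abs_mul, abs_of_pos (zpow_pos hlam0 _)]
    _ ≤ lam ^ (-(r : ℤ)) * (lam ^ q * M + lam ^ r * M) := by gcongr
    _ = (lam ^ (-(r : ℤ)) * lam ^ r + lam ^ (-(r : ℤ)) * lam ^ q) * M := by ring
    _ ≤ (1 + lam ^ (1 - (T : ℤ))) * M := by
      rw [cancel]
      gcongr

end Size

section Arithmetic

variable {p : Fin m → ℕ} {b : Fin m → ℝ}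

/-- The translation part `b_σ` as a polynomial in the contraction ratio `λ`, by the recursion
`b_{iσ} = λ ^ p_i * b_σ + b_i`. -/
def wordPoly (p : Fin m → ℕ) (b : Fin m → ℝ) : List (Fin m) → ℝ[X]
  | [] => 0
  | i :: σ => X ^ p i * wordPoly p b σ + C (b i)

theorem eval_wordPoly (lam : ℝ) (σ : List (Fin m)) :
    (wordPoly p b σ).eval lam = wordB lam p b σ := by
  induction σ with
  | nil => simp [wordPoly, wordB_nil]
  | cons i σ ih => simp [wordPoly, wordB_cons, ih]

theorem coeff_wordPoly_mem_Bset (hp : ∀ i, 1 ≤ p i) (σ : List (Fin m)) (n : ℕ) :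
    (wordPoly p b σ).coeff n ∈ Bset b := by
  induction σ generalizing n with
  | nil => simp [wordPoly, Bset]
  | cons i σ ih =>
    have hpi := hp i
    rw [wordPoly, coeff_add, coeff_X_pow_mul', coeff_C]
    rcases Nat.eq_zero_or_pos n with rfl | hn
    · rw [if_neg (by omega), if_pos rfl, zero_add]
      exact Set.mem_insert_of_mem _ ⟨i, rfl⟩
    · rw [if_neg hn.ne', add_zero]
      split_ifs
      · exact ih _
      · exact Set.mem_insert 0 _

theorem coeff_wordPoly_eq_zero (hp : ∀ i, 1 ≤ p i) {σ : List (Fin m)} {n : ℕ}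
    (hn : wordP p σ ≤ n) : (wordPoly p b σ).coeff n = 0 := by
  induction σ generalizing n with
  | nil => simp [wordPoly]
  | cons i σ ih =>
    have hpi := hp i
    rw [wordP_cons] at hn
    rw [wordPoly, coeff_add, coeff_X_pow_mul', coeff_C, if_pos (by omega), if_neg (by omega),
      ih (by omega), add_zero]

theorem natDegree_wordPoly_le (hp : ∀ i, 1 ≤ p i) {σ : List (Fin m)} {N : ℕ}
    (hN : wordP p σ ≤ N + 1) : (wordPoly p b σ).natDegree ≤ N :=
  natDegree_le_iff_coeff_eq_zero.2 fun _ hn => coeff_wordPoly_eq_zero hp (hN.trans hn)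

theorem eval_inv_reflect {K : Type*} [Field K] {x : K} (hx : x ≠ 0) {f : K[X]} {N : ℕ}
    (hf : f.natDegree ≤ N) : (reflect N f).eval x⁻¹ = (x ^ N)⁻¹ * f.eval x := by
  let := invertibleOfNonzero hx
  have reversal := eval₂_reflect_mul_pow (RingHom.id K) x N f hf
  rw [invOf_eq_inv] at reversal
  rw [eq_inv_mul_iff_mul_eq₀ (pow_ne_zero N hx), mul_comm]
  exact reversal

theorem exists_coeff_mem_BB_eval_inv_eq {lam : ℝ} (hlam : lam ≠ 0) (hp : ∀ i, 1 ≤ p i)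
    {σ τ : List (Fin m)} {N : ℕ} (hσ : wordP p σ ≤ N + 1) (hτ : wordP p τ ≤ N + 1) :
    ∃ R : ℝ[X], (∀ n, R.coeff n ∈ BB b) ∧
      (lam ^ N)⁻¹ * (wordB lam p b σ - wordB lam p b τ) = R.eval lam⁻¹ := by
  refine ⟨reflect N (wordPoly p b σ - wordPoly p b τ), fun n => ?_, ?_⟩
  · rw [coeff_reflect, coeff_sub]
    exact ⟨_, coeff_wordPoly_mem_Bset hp σ _, _, coeff_wordPoly_mem_Bset hp τ _, rfl⟩
  · have degree_le : (wordPoly p b σ - wordPoly p b τ).natDegree ≤ N :=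
      natDegree_sub_le_of_le (natDegree_wordPoly_le hp hσ) (natDegree_wordPoly_le hp hτ)
        |>.trans (max_self N).le
    rw [eval_inv_reflect hlam degree_le, eval_sub, eval_wordPoly, eval_wordPoly]

end Arithmetic

theorem mem_Xi_of_abs_wordB_sub_le {lam : ℝ} (hlam0 : 0 < lam) (hlam1 : lam < 1)
    {p : Fin m → ℕ} (hp : ∀ i, 1 ≤ p i) {b : Fin m → ℝ} {T : ℕ} {σ τ : List (Fin m)} {x : ℝ}
    (hσx : |wordB lam p b σ - x| ≤ lam ^ wordP p σ * (bmax b / (1 - lam)))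
    (hτx : |wordB lam p b τ - x| ≤ lam ^ wordP p τ * (bmax b / (1 - lam)))
    (hτ : 0 < wordP p τ) (hστ : wordP p σ < wordP p τ + T) (hτσ : wordP p τ < wordP p σ + T) :
    ((wordP p σ : ℤ) - (wordP p τ : ℤ),
      lam ^ (-(wordP p τ : ℤ)) * (wordB lam p b σ - wordB lam p b τ)) ∈ Xi lam b T := by
  have radius_nonneg : 0 ≤ bmax b / (1 - lam) := div_nonneg bmax_nonneg (sub_pos.2 hlam1).le
  obtain ⟨N, hN⟩ : ∃ N, T + wordP p τ = N + 2 := Nat.exists_eq_add_of_le' (by omega)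
  obtain ⟨R, coeff_mem, eval_eq⟩ := exists_coeff_mem_BB_eval_inv_eq (b := b) hlam0.ne' hp
    (show wordP p σ ≤ N + 1 by omega) (show wordP p τ ≤ N + 1 by omega)
  have scale_eq : lam ^ (2 - (T : ℤ)) * lam ^ (-(wordP p τ : ℤ)) = (lam ^ N)⁻¹ := by
    rw [← zpow_add₀ hlam0.ne', ← zpow_natCast, ← zpow_neg]
    congr 1
    omega
  refine ⟨abs_le.2 ⟨by dsimp only; omega, by dsimp only; omega⟩, ?_, R, coeff_mem, ?_⟩
  · rw [mul_div_assoc]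
    exact abs_zpow_neg_mul_sub_le hlam0 hlam1.le radius_nonneg hσx hτx hτσ
  · rw [← mul_assoc, scale_eq, eval_eq]

theorem stmt6_general {lam : ℝ} (hlam0 : 0 < lam) (hlam1 : lam < 1) {p : Fin m → ℕ}
    (hp : ∀ i, 1 ≤ p i) (b : Fin m → ℝ) {T : ℕ} (hpT : ∀ i, p i ≤ T) {ω ω' : ℕ → Fin m}
    (hpi : ∃ x : ℝ,
      Tendsto (fun k => SW lam p b (prefixList ω k) 0) atTop (nhds x) ∧
      Tendsto (fun k => SW lam p b (prefixList ω' k) 0) atTop (nhds x)) (a : ℕ) :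
    ∃ σ τ : List (Fin m), (∃ n, σ = prefixList ω n) ∧ (∃ n, τ = prefixList ω' n) ∧
      a < wordP p σ ∧ wordP p σ ≤ a + T ∧ a < wordP p τ ∧ wordP p τ ≤ a + T ∧
      ((wordP p σ : ℤ) - (wordP p τ : ℤ),
        lam ^ (-(wordP p τ : ℤ)) * (wordB lam p b σ - wordB lam p b τ)) ∈ Xi lam b T := by
  obtain ⟨x, hx, hx'⟩ := hpi
  obtain ⟨n, hσ, hσT⟩ := exists_wordP_prefixList_mem_Ioc hp hpT ω a
  obtain ⟨n', hτ, hτT⟩ := exists_wordP_prefixList_mem_Ioc hp hpT ω' a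
  refine ⟨_, _, ⟨n, rfl⟩, ⟨n', rfl⟩, hσ, hσT, hτ, hτT, ?_⟩
  exact mem_Xi_of_abs_wordB_sub_le hlam0 hlam1 hp
    (abs_wordB_prefixList_sub_le hlam0.le hlam1 hp hx n)
    (abs_wordB_prefixList_sub_le hlam0.le hlam1 hp hx' n')
    (by omega) (by omega) (by omega)

theorem stmt6 (lam : ℝ) (hlam0 : 0 < lam) (hlam1 : lam < 1)
    (hPisot : IsPisot lam⁻¹)
    {m : ℕ} (hm : 2 ≤ m) (p : Fin m → ℕ) (hp : ∀ i, 1 ≤ p i)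
    (b : Fin m → ℝ) (hbZ : ∀ i, ∃ z : ℤ, b i = (z : ℝ))
    (T : ℕ) (hT : T = Finset.univ.sup p)
    (ω ω' : ℕ → Fin m)
    (hpi : ∃ x : ℝ,
      Tendsto (fun k => SW lam p b (prefixList ω k) 0) atTop (nhds x) ∧
      Tendsto (fun k => SW lam p b (prefixList ω' k) 0) atTop (nhds x)) :
    ∀ k : ℕ, 1 ≤ k →
      ∃ σ τ : List (Fin m), (∃ n, σ = prefixList ω n) ∧ (∃ n, τ = prefixList ω' n) ∧
        (k - 1) * T < wordP p σ ∧ wordP p σ ≤ k * T ∧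
        (k - 1) * T < wordP p τ ∧ wordP p τ ≤ k * T ∧
        ((wordP p σ : ℤ) - (wordP p τ : ℤ),
          lam ^ (-(wordP p τ : ℤ)) * (wordB lam p b σ - wordB lam p b τ)) ∈ Xi lam b T := by
  intro k hk
  obtain ⟨j, rfl⟩ := Nat.exists_eq_add_of_le' hk
  simpa only [Nat.add_sub_cancel, Nat.add_one_mul] using stmt6_general hlam0 hlam1 hp b
    (fun i => hT ▸ Finset.le_sup (Finset.mem_univ i)) hpi (j * T)

end PVOSC
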